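/- Let λ_1 ≥ λ_2 ≥ ⋯ > 0 be a (finite or countable) nonincreasing sequence of positive reals with ∑_j λ_j² = 1, let α ∈ (0,1), and suppose ∑_j λ_j^{2α} < ∞; set R_α = (1/(1−α)) · ln ∑_j λ_j^{2α}. Then for every positive integer D, the tail satisfies ∑_{j ≥ D+1} λ_j² ≤ exp( ((1−α)/α) · (R_α − ln D) ). -/

import Mathlib

/-!
Write `S = ∑ⱼ λⱼ^(2α)`. Since `λ` is nonincreasing, each of the first `D` terms of `S` is at least
`λ_D^(2α)`, so `D · λ_D^(2α) ≤ S` and therefore `λ_D^(2(1-α)) ≤ (S/D)^((1-α)/α)`. For `j ≥ D` one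
has `λⱼ² = λⱼ^(2α) · λⱼ^(2(1-α)) ≤ λⱼ^(2α) · (S/D)^((1-α)/α)`. Summing over `j ≥ D` bounds the tail
by `S · (S/D)^((1-α)/α)`, which is the claimed exponential.
-/

noncomputable section
open scoped BigOperators

/-- Let `λ 0 ≥ λ 1 ≥ ⋯ ≥ 0` be a nonincreasing sequence of nonnegative reals
(a finite sequence of positive reals is encoded by padding with zeros) with
`∑ⱼ λⱼ² = 1`, let `α ∈ (0,1)`, and suppose `∑ⱼ λⱼ^(2α) < ∞`; set
`R_α = (1/(1-α)) · ln ∑ⱼ λⱼ^(2α)`.  Then for every positive integer `D`, the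
tail `∑_{j ≥ D+1} λⱼ²` (here `∑' j, λ (j + D) ^ 2`, since indexing starts at 0)
satisfies `∑_{j ≥ D+1} λⱼ² ≤ exp( ((1-α)/α) · (R_α − ln D) )`. -/
theorem renyi_tail_bound (lam : ℕ → ℝ) (hnonneg : ∀ j, 0 ≤ lam j)
    (hmono : Antitone lam)
    (hsummable : Summable fun j => lam j ^ 2)
    (hnorm : ∑' j, lam j ^ 2 = 1)
    (α : ℝ) (hα : α ∈ Set.Ioo (0 : ℝ) 1)
    (hαsum : Summable fun j => lam j ^ (2 * α))
    (D : ℕ) (hD : 1 ≤ D) :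
    ∑' j, lam (j + D) ^ 2 ≤
      Real.exp ((1 - α) / α *
        ((1 - α)⁻¹ * Real.log (∑' j, lam j ^ (2 * α)) - Real.log D)) := by
  obtain ⟨h0, h1⟩ := hα
  set S := ∑' j, lam j ^ (2 * α) with hS
  have hterm : ∀ j, 0 ≤ lam j ^ (2 * α) := fun j => Real.rpow_nonneg (hnonneg j) _
  have hDpos : (0 : ℝ) < D := by exact_mod_cast hD
  -- The normalization rules out the zero sequence, so that `log S` is a genuine logarithm.
  have hSpos : 0 < S := by
    obtain ⟨j, hj⟩ : ∃ j, lam j ≠ 0 := by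
      by_contra! h
      simp [h] at hnorm
    exact hαsum.tsum_pos hterm j (Real.rpow_pos_of_pos ((hnonneg j).lt_of_ne' hj) _)
  have hhead : lam D ^ (2 * α) ≤ S / D := by
    rw [le_div_iff₀ hDpos]
    calc lam D ^ (2 * α) * D = ∑ _j ∈ Finset.range D, lam D ^ (2 * α) := by
          simp [mul_comm]
      _ ≤ ∑ j ∈ Finset.range D, lam j ^ (2 * α) :=
          Finset.sum_le_sum fun j hj => Real.rpow_le_rpow (hnonneg D)
            (hmono (Finset.mem_range.mp hj).le) (by positivity)
      _ ≤ S := hαsum.sum_le_tsum _ fun j _ => hterm j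
  have hfactor : lam D ^ (2 * (1 - α)) ≤ (S / D) ^ ((1 - α) / α) := by
    have hexp : 2 * (1 - α) = 2 * α * ((1 - α) / α) := by field_simp
    rw [hexp, Real.rpow_mul (hnonneg D)]
    exact Real.rpow_le_rpow (hterm D) hhead (div_nonneg (by linarith) h0.le)
  have hpoint : ∀ j, lam (j + D) ^ 2 ≤ lam (j + D) ^ (2 * α) * (S / D) ^ ((1 - α) / α) := by
    intro j
    have hsplit : lam (j + D) ^ 2 = lam (j + D) ^ (2 * α) * lam (j + D) ^ (2 * (1 - α)) := by
      rw [← Real.rpow_add_of_nonneg (hnonneg _) (by linarith) (by linarith), ← Real.rpow_natCast]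
      congr 1
      push_cast
      ring
    rw [hsplit]
    refine mul_le_mul_of_nonneg_left (le_trans ?_ hfactor) (hterm _)
    exact Real.rpow_le_rpow (hnonneg _) (hmono (Nat.le_add_left D j)) (by linarith)
  have htailsum : Summable fun j => lam (j + D) ^ (2 * α) :=
    (summable_nat_add_iff (f := fun j => lam j ^ (2 * α)) D).mpr hαsum
  have htail : ∑' j, lam (j + D) ^ (2 * α) ≤ S := by
    rw [hS, ← hαsum.sum_add_tsum_nat_add D]
    exact le_add_of_nonneg_left (Finset.sum_nonneg fun j _ => hterm j)
  calc ∑' j, lam (j + D) ^ 2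
      ≤ ∑' j, lam (j + D) ^ (2 * α) * (S / D) ^ ((1 - α) / α) :=
        ((summable_nat_add_iff (f := fun j => lam j ^ 2) D).mpr hsummable).tsum_le_tsum hpoint
          (htailsum.mul_right _)
    _ = (∑' j, lam (j + D) ^ (2 * α)) * (S / D) ^ ((1 - α) / α) := tsum_mul_right
    _ ≤ S * (S / D) ^ ((1 - α) / α) := mul_le_mul_of_nonneg_right htail (by positivity)
    _ = _ := by
        rw [Real.rpow_def_of_pos (by positivity), Real.log_div hSpos.ne' hDpos.ne']
        nth_rewrite 1 [← Real.exp_log hSpos]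
        rw [← Real.exp_add]
        congr 1
        have h1α : 1 - α ≠ 0 := by linarith
        field_simp
        ring
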